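/- For any x, v ∈ ℝ³ with x ≠ 0, setting H = |v|² + q/|x| and L = x × v, the norm of x is recovered from the conserved quantities and the radial momentum x·v by the formula |x| = ( q + √( q² + 4H|L|² + 4H(x·v)² ) ) / (2H). -/

import Mathlib

/-!
By Lagrange's identity `|L|² + (x·v)² = |x|²|v|²`, multiplying `H = |v|² + q/|x|` by `|x|²` turns
the energy into the quadratic equation `H r² = q r + |L|² + (x·v)²` for `r = |x|`. When `H > 0` its
two roots have non-positive product, so the positive number `|x|` is the larger one.
-/

open scoped RealInnerProductSpace

noncomputable section

/-- Euclidean three-space. -/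
abbrev R3 : Type := EuclideanSpace ℝ (Fin 3)

/-- The cross product on `ℝ³`. -/
def cross3 (x y : R3) : R3 :=
  (WithLp.equiv 2 (Fin 3 → ℝ)).symm
    ![x 1 * y 2 - x 2 * y 1, x 2 * y 0 - x 0 * y 2, x 0 * y 1 - x 1 * y 0]

/-- The energy `H(x,v) = |v|² + q/|x|` of the repulsive Kepler problem. -/
def keplerH (q : ℝ) (x v : R3) : ℝ := ‖v‖ ^ 2 + q / ‖x‖

lemma eq_add_sqrt_div_of_mul_sq_eq {a b c r : ℝ} (ha : 0 < a) (hc : 0 ≤ c) (hr : 0 < r)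
    (h : a * r ^ 2 = b * r + c) : r = (b + √(b ^ 2 + 4 * a * c)) / (2 * a) := by
  have discrim_eq : b ^ 2 + 4 * a * c = (2 * a * r - b) ^ 2 := by
    linear_combination -4 * a * h
  have linear_coeff_le : b ≤ a * r := le_of_mul_le_mul_right (by linarith) hr
  have root_nonneg : 0 ≤ 2 * a * r - b := by linarith [mul_pos ha hr]
  rw [discrim_eq, Real.sqrt_sq root_nonneg, add_sub_cancel,
    mul_div_cancel_left₀ r (by positivity)]

lemma cross3_eq_toLp_crossProduct (x y : R3) :
    cross3 x y = WithLp.toLp 2 (crossProduct x.ofLp y.ofLp) := by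
  rw [cross_apply]
  rfl

lemma norm_cross3_sq_add_inner_sq (x y : R3) :
    ‖cross3 x y‖ ^ 2 + ⟪x, y⟫ ^ 2 = ‖x‖ ^ 2 * ‖y‖ ^ 2 := by
  simp only [← real_inner_self_eq_norm_sq, cross3_eq_toLp_crossProduct,
    EuclideanSpace.inner_eq_star_dotProduct, star_trivial, cross_dot_cross]
  rw [dotProduct_comm y.ofLp x.ofLp]
  ring

lemma keplerH_pos {q : ℝ} (hq : 0 < q) {x : R3} (hx : x ≠ 0) (v : R3) : 0 < keplerH q x v :=
  add_pos_of_nonneg_of_pos (sq_nonneg ‖v‖) (div_pos hq (norm_pos_iff.mpr hx))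

lemma keplerH_mul_norm_sq (q : ℝ) (x v : R3) :
    keplerH q x v * ‖x‖ ^ 2 = q * ‖x‖ + (‖cross3 x v‖ ^ 2 + ⟪x, v⟫ ^ 2) := by
  have potential_mul : q / ‖x‖ * ‖x‖ ^ 2 = q * ‖x‖ := by
    rw [div_mul_eq_mul_div, mul_div_assoc, sq, mul_self_div_self]
  rw [keplerH, add_mul, potential_mul, norm_cross3_sq_add_inner_sq]
  ring

theorem kepler_norm_from_conserved_general {q : ℝ} {x v : R3} (hx : x ≠ 0)
    (hH : 0 < keplerH q x v) :
    ‖x‖ = (q + √(q ^ 2 + 4 * keplerH q x v * ‖cross3 x v‖ ^ 2 +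
        4 * keplerH q x v * ⟪x, v⟫ ^ 2)) / (2 * keplerH q x v) := by
  rw [add_assoc, ← mul_add]
  exact eq_add_sqrt_div_of_mul_sq_eq hH (by positivity) (norm_pos_iff.mpr hx)
    (keplerH_mul_norm_sq q x v)

/-- For `x ≠ 0`, with `H = |v|² + q/|x|` and `L = x × v`, the norm of `x` is recovered from
the conserved quantities and the radial momentum `x·v`:
`|x| = (q + √(q² + 4H|L|² + 4H(x·v)²)) / (2H)`. -/
theorem kepler_norm_from_conserved (q : ℝ) (hq : 0 < q)
    (x v : R3) (hx : x ≠ 0) :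
    ‖x‖ = (q + Real.sqrt (q ^ 2 + 4 * keplerH q x v * ‖cross3 x v‖ ^ 2 +
        4 * keplerH q x v * (⟪x, v⟫ : ℝ) ^ 2)) / (2 * keplerH q x v) :=
  kepler_norm_from_conserved_general hx (keplerH_pos hq hx v)
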